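/- (Key lemma for the no-go theorem.) Assume an interval type 𝕀 : Type with elements O, 1 : 𝕀, cofibrancy data cof : Type → Type, and internal-universe data U : Type 2, El : Fib U, code : {Γ : Type} → Fib Γ → Γ → U, Elcode : ∀ {Γ : Type} (Φ : Fib Γ), El[code Φ] = Φ. Then every pointwise fibrant family is fibrant: for any Γ : Type and A : Γ → Type, given π : (x : Γ) → isFib Unit (fun _ => A x), the type isFib Γ A is inhabited. -/

import Mathlib

/-!
Pointwise codes assemble into a single classifying map `c : Γ → U`, sending `x` to the value at the
point of `Unit` of the code of the fibration `⟨fun _ => A x, π x⟩`. By `Elcode` the fibre of `El`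
over `c x` is `A x`, so `El ∘ c = A` by function extensionality, and the fibration structure that
`El` pulls back along `c` transports to `A`. The argument needs `code` to be applicable to `Γ`-many
fibrations depending on the variable `x`, i.e. to be available in an arbitrary context.
-/

namespace Crisp

/-! CCHM fibrations in the internal language (Section 2 of the paper). -/

universe u v

/-- The path functor `Path A = 𝕀 → A`. -/
def Path (𝕀 : Type) (A : Type u) : Type u := 𝕀 → A

/-- Functorial action of `Path` (postcomposition). -/
def Path' (𝕀 : Type) {A : Type u} {B : Type v} (f : A → B) (p : Path 𝕀 A) : Path 𝕀 B :=
  fun i => f (p i)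

/-- The extension relation `t ↗ x`: the partial element `t` extends to `x`. -/
def Extends {φ : Type} {A : Type u} (t : φ → A) (x : A) : Prop :=
  ∀ u : φ, t u = x

/-- CCHM composition structure for a path of types `P : 𝕀 → Type`. -/
def CCHM (𝕀 : Type) (O I1 : 𝕀) (cof : Type → Type) (P : 𝕀 → Type) : Type 1 :=
  (φ : Type) → cof φ → (p : ∀ i : 𝕀, φ → P i) →
    (Σ' a₀ : P O, Extends (p O) a₀) → Σ' a₁ : P I1, Extends (p I1) a₁

/-- CCHM fibration structures for a family `A : Γ → Type`. -/
def isFib (𝕀 : Type) (O I1 : 𝕀) (cof : Type → Type) (Γ : Type u) (A : Γ → Type) :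
    Type (max u 1) :=
  (p : Path 𝕀 Γ) → CCHM 𝕀 O I1 cof (fun i => A (p i))

/-- Fibrations over `Γ`: families with a fibration structure. -/
def Fib (𝕀 : Type) (O I1 : 𝕀) (cof : Type → Type) (Γ : Type u) : Type (max u 1) :=
  Σ A : Γ → Type, isFib 𝕀 O I1 cof Γ A

/-- Re-indexing of a fibration along `γ : Γ' → Γ`. -/
def reindex {𝕀 : Type} {O I1 : 𝕀} {cof : Type → Type} {Γ : Type u} {Γ' : Type v}
    (Φ : Fib 𝕀 O I1 cof Γ) (γ : Γ' → Γ) : Fib 𝕀 O I1 cof Γ' :=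
  ⟨fun x => Φ.1 (γ x), fun p => Φ.2 (Path' 𝕀 γ p)⟩

/-- key lemma for the no-go theorem: given internal-universe data,
every pointwise fibrant family is fibrant. -/
theorem pointwise_fibrant_implies_fibrant
    (𝕀 : Type) (O I1 : 𝕀) (cof : Type → Type)
    (U : Type 2) (El : Fib 𝕀 O I1 cof U)
    (code : {Γ : Type} → Fib 𝕀 O I1 cof Γ → Γ → U)
    (Elcode : ∀ {Γ : Type} (Φ : Fib 𝕀 O I1 cof Γ), reindex El (code Φ) = Φ)
    (Γ : Type) (A : Γ → Type)
    (π : ∀ x : Γ, isFib 𝕀 O I1 cof Unit (fun _ => A x)) :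
    Nonempty (isFib 𝕀 O I1 cof Γ A) := by
  let c : Γ → U := fun x => code ⟨fun _ => A x, π x⟩ ()
  have hc : (fun x => El.1 (c x)) = A :=
    funext fun x => congrFun (congrArg Sigma.fst (Elcode ⟨fun _ => A x, π x⟩)) ()
  exact hc ▸ ⟨(reindex El c).2⟩

end Crisp
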